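/- Let G ⊆ UT(n,ℝ) be a real unipotent group, F : ℝ^d → G a polynomial map, and X = F(ℝ^d). Suppose g ∈ G and H is a real algebraic subgroup of G such that gH is the minimal coset of a real algebraic subgroup of G containing X (X ⊆ gH, and gH ⊆ g'H' whenever g' ∈ G, H' is a real algebraic subgroup of G and X ⊆ g'H'). Then there exists α ∈ X^♯ whose nearest coset is gH; that is, the coset gH is near α and gH ⊆ g'H' for every g' ∈ G and real algebraic subgroup H' ⊆ G such that the coset g'H' is near α. -/

import Mathlib

open Pointwise Filter

noncomputable section

/-- Square matrices of size `n` over `R`. -/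
abbrev Mat (n : ℕ) (R : Type) : Type := Matrix (Fin n) (Fin n) R

/-- The set `UT(n,ℝ)` of upper triangular matrices with `1`s on the diagonal. -/
def UTset (n : ℕ) : Set (Mat n ℝ) :=
  {A | (∀ i, A i i = 1) ∧ ∀ i j : Fin n, (j : ℕ) < (i : ℕ) → A i j = 0}

/-- The entries of a matrix, as a point of `ℝ^(n²)`. -/
def matEval {n : ℕ} (A : Mat n ℝ) : Fin n × Fin n → ℝ := fun ij => A ij.1 ij.2

/-- A real unipotent group: a subgroup of `UT(n,ℝ)` which is the common zero set in
`UT(n,ℝ)` of a family of real polynomials in the matrix entries. -/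
def IsRealUnipotentGroup (n : ℕ) (G : Set (Mat n ℝ)) : Prop :=
  (∃ S : Set (MvPolynomial (Fin n × Fin n) ℝ),
      G = {A | A ∈ UTset n ∧ ∀ p ∈ S, MvPolynomial.eval (matEval A) p = 0}) ∧
    (1 : Mat n ℝ) ∈ G ∧ (∀ a ∈ G, ∀ b ∈ G, a * b ∈ G) ∧ ∀ a ∈ G, a⁻¹ ∈ G

/-- A real algebraic subgroup of a real unipotent group `G`. -/
def IsRealAlgSubgroup (n : ℕ) (G H : Set (Mat n ℝ)) : Prop :=
  H ⊆ G ∧ IsRealUnipotentGroup n H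

/-- `N` is a normal subgroup-set of `G`. -/
def IsNormalIn (n : ℕ) (G N : Set (Mat n ℝ)) : Prop :=
  ∀ g ∈ G, ∀ x ∈ N, g * x * g⁻¹ ∈ N

/-- `Γ` is a lattice in `G`: a discrete subgroup which is cocompact, i.e. there is a
compact `K ⊆ G` with `K·Γ = G` (equivalently, `G/Γ` is compact). -/
def IsLatticeIn (n : ℕ) (G Γ : Set (Mat n ℝ)) : Prop :=
  Γ ⊆ G ∧ (1 : Mat n ℝ) ∈ Γ ∧ (∀ a ∈ Γ, ∀ b ∈ Γ, a * b ∈ Γ) ∧ (∀ a ∈ Γ, a⁻¹ ∈ Γ) ∧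
    DiscreteTopology ↥Γ ∧
    ∃ K : Set (Mat n ℝ), K ⊆ G ∧ IsCompact K ∧ ∀ g ∈ G, ∃ k ∈ K, ∃ γ ∈ Γ, g = k * γ

/-- `H` is `Γ`-rational: `Γ ∩ H` is a lattice in `H`. -/
def IsRationalFor (n : ℕ) (Γ H : Set (Mat n ℝ)) : Prop :=
  IsLatticeIn n H (Γ ∩ H)

/-- The hyperreal matrix represented by a sequence of real matrices. -/
def matOfSeq (n : ℕ) (u : ℕ → Mat n ℝ) : Mat n Hyperreal :=
  Matrix.of fun i j => Hyperreal.ofSeq fun k => u k i j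

/-- The nonstandard extension `S^♯` of a set `S` of real matrices: hyperreal matrices
represented by sequences landing in `S` on a set of indices in the ultrafilter. -/
def matSharp (n : ℕ) (S : Set (Mat n ℝ)) : Set (Mat n Hyperreal) :=
  {A | ∃ u : ℕ → Mat n ℝ, (∀ᶠ k in hyperfilter ℕ, u k ∈ S) ∧ A = matOfSeq n u}

/-- The canonical embedding of real matrices into hyperreal matrices. -/
def matCast {n : ℕ} (A : Mat n ℝ) : Mat n Hyperreal :=
  Matrix.of fun i j => (A i j : Hyperreal)

/-- `μ(G)`: elements of `G^♯` all of whose entries are infinitesimally close to the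
corresponding entries of the identity matrix. -/
def muSet (n : ℕ) (G : Set (Mat n ℝ)) : Set (Mat n Hyperreal) :=
  {A | A ∈ matSharp n G ∧ ∀ i j, Hyperreal.Infinitesimal (A i j - (1 : Mat n Hyperreal) i j)}

/-- The coset `gH` is near `α`, i.e. `α ∈ μ(G)·g·H^♯`. -/
def NearCoset (n : ℕ) (G : Set (Mat n ℝ)) (g : Mat n ℝ) (H : Set (Mat n ℝ))
    (α : Mat n Hyperreal) : Prop :=
  α ∈ muSet n G * ({matCast g} * matSharp n H)

/-- The set of standard parts of the finite elements of a set of hyperreal matrices. -/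
def matStSet (n : ℕ) (A : Set (Mat n Hyperreal)) : Set (Mat n ℝ) :=
  {B | ∃ a ∈ A, ∀ i j, Hyperreal.IsSt (a i j) (B i j)}

/-- A polynomial map `ℝ^d → Mat n ℝ`. -/
def IsPolyMapVec (d n : ℕ) (F : (Fin d → ℝ) → Mat n ℝ) : Prop :=
  ∃ P : Fin n → Fin n → MvPolynomial (Fin d) ℝ,
    ∀ x i j, F x i j = MvPolynomial.eval x (P i j)

/-- The inclusion `ℝ →+* ℝ*` as a ring homomorphism. -/
def realHyperRingHom : ℝ →+* Hyperreal where
  toFun r := (r : Hyperreal)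
  map_one' := Hyperreal.coe_one
  map_mul' := Hyperreal.coe_mul
  map_zero' := Hyperreal.coe_zero
  map_add' := Hyperreal.coe_add

/-- A semialgebraic subset of matrix space: a finite union of sets defined by finitely
many polynomial equations and finitely many strict polynomial inequalities. -/
def IsSemialgebraic (n : ℕ) (S : Set (Mat n ℝ)) : Prop :=
  ∃ (k : ℕ) (P Q : Fin k → Finset (MvPolynomial (Fin n × Fin n) ℝ)),
    S = ⋃ t : Fin k, {A | (∀ p ∈ P t, MvPolynomial.eval (matEval A) p = 0) ∧
      ∀ q ∈ Q t, 0 < MvPolynomial.eval (matEval A) q}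

/-!
Choose `α = F(u)` for a hyperreal point `u` of `ℝ^d` at which no nonzero polynomial takes an
infinitesimal value. A coset containing `X` is then trivially near `α`; conversely, every coset
`gH` near `α` contains `X`. Indeed, suppose that `X ⊆ gN` for an algebraic subgroup `N` strictly
containing `H`. Translations by unipotent matrices lower the weight filtration of the polynomial
functions, so a nonconstant right `H`-invariant polynomial on `N` that has minimal weight is, up
to a constant, a nonzero homomorphism `p : N → ℝ` vanishing on `H`. Since `gH` is near `α`, the
value of `p(g⁻¹F)` at `u` is infinitesimal, so `p(g⁻¹F)` is the zero polynomial and `X ⊆ g ker p`.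
Starting from `N = G`, Noetherianity makes the descent through such kernels end, necessarily
at `H`.
-/

section InvariantVector

/-- Kolchin's fixed-point argument, with `D i` in the role of `g - 1` for a unipotent `g`. -/
lemma exists_notMem_forall_map_mem {M ι : Type*} {W : ℕ → Set M} {V K : Set M} {D : ι → M → M}
    (hW_zero : W 0 ⊆ K) (hW_exhaust : ∀ p ∈ V, ∃ w, p ∈ W w)
    (hD_lower : ∀ i w, Set.MapsTo (D i) (W (w + 1)) (W w)) (hDV : ∀ i, Set.MapsTo (D i) V V)
    (hVK : ∃ p ∈ V, p ∉ K) : ∃ p ∈ V, p ∉ K ∧ ∀ i, D i p ∈ K := by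
  classical
  have hdeg : ∃ w, ∃ p ∈ V, p ∉ K ∧ p ∈ W w := by
    obtain ⟨p, hpV, hpK⟩ := hVK
    obtain ⟨w, hpw⟩ := hW_exhaust p hpV
    exact ⟨w, p, hpV, hpK, hpw⟩
  obtain ⟨p, hpV, hpK, hpw⟩ := Nat.find_spec hdeg
  refine ⟨p, hpV, hpK, fun i ↦ ?_⟩
  cases hw : Nat.find hdeg with
  | zero => exact absurd (hW_zero (hw ▸ hpw)) hpK
  | succ w =>
    by_contra hDK
    exact Nat.find_min hdeg (hw ▸ Nat.lt_succ_self w)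
      ⟨D i p, hDV i hpV, hDK, hD_lower i w (hw ▸ hpw)⟩

end InvariantVector

section WeightFiltration

open MvPolynomial

variable {σ R : Type*} [CommRing R] (wt : σ → ℕ)

variable (R) in
/-- The weight filtration of the polynomial ring in which `X s` has weight `wt s`: the polynomials
all of whose monomials have weight `< w`. The strict inequality makes the step `w = 0` trivial. -/
def weightLT (w : ℕ) : Submodule R (MvPolynomial σ R) :=
  restrictSupport R {d | Finsupp.weight wt d < w}

lemma weightLT_mono : Monotone (weightLT R wt) :=
  fun _ _ hab ↦ restrictSupport_mono R fun _ hd ↦ hd.trans_le hab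

lemma weightLT_zero : weightLT R wt 0 = ⊥ := by
  simp [weightLT, restrictSupport_eq_span]

lemma exists_mem_weightLT (p : MvPolynomial σ R) : ∃ w, p ∈ weightLT R wt w :=
  ⟨weightedTotalDegree wt p + 1, (mem_restrictSupport_iff R).2 fun _ hd ↦
    Nat.lt_succ_of_le (le_weightedTotalDegree wt hd)⟩

lemma monomial_mem_weightLT {d : σ →₀ ℕ} {w : ℕ} (h : Finsupp.weight wt d < w) (c : R) :
    monomial d c ∈ weightLT R wt w :=
  (monomial_mem_restrictSupport R).2 (Or.inl h)

lemma X_mem_weightLT {s : σ} {w : ℕ} (h : wt s < w) : (X s : MvPolynomial σ R) ∈ weightLT R wt w :=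
  monomial_mem_weightLT wt (by simpa [Finsupp.weight_single] using h) 1

variable {wt}

lemma mul_mem_weightLT {a b : ℕ} {p q : MvPolynomial σ R} (hp : p ∈ weightLT R wt (a + 1))
    (hq : q ∈ weightLT R wt b) : p * q ∈ weightLT R wt (a + b) := by
  have hpq := Submodule.mul_mem_mul hp hq
  rw [weightLT, weightLT, ← restrictSupport_add] at hpq
  refine restrictSupport_mono R ?_ hpq
  rintro _ ⟨d, hd, e, he, rfl⟩
  simp only [Set.mem_ofPred_eq, map_add] at *
  omega

variable {τ : MvPolynomial σ R →ₐ[R] MvPolynomial σ R}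

lemma map_mul_sub_mem_weightLT {a b : ℕ} {p q : MvPolynomial σ R}
    (hp : p ∈ weightLT R wt (a + 1)) (hq : q ∈ weightLT R wt (b + 1))
    (hτp : τ p - p ∈ weightLT R wt a) (hτq : τ q - q ∈ weightLT R wt b) :
    τ (p * q) - p * q ∈ weightLT R wt (a + b) := by
  have hτq' : τ q ∈ weightLT R wt (b + 1) := by
    simpa using add_mem (weightLT_mono wt b.le_succ hτq) hq
  have leibniz : τ (p * q) - p * q = τ q * (τ p - p) + p * (τ q - q) := by
    rw [map_mul]; ring
  rw [leibniz]
  exact add_mem (add_comm b a ▸ mul_mem_weightLT hτq' hτp) (mul_mem_weightLT hp hτq)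

lemma map_monomial_sub_mem_weightLT (hτ : ∀ s, τ (X s) - X s ∈ weightLT R wt (wt s))
    (d : σ →₀ ℕ) : τ (monomial d 1) - monomial d 1 ∈ weightLT R wt (Finsupp.weight wt d) := by
  have hadd (d e : σ →₀ ℕ)
      (hd : τ (monomial d 1) - monomial d 1 ∈ weightLT R wt (Finsupp.weight wt d))
      (he : τ (monomial e 1) - monomial e 1 ∈ weightLT R wt (Finsupp.weight wt e)) :
      τ (monomial (d + e) 1) - monomial (d + e) 1 ∈
        weightLT R wt (Finsupp.weight wt (d + e)) := by
    rw [map_add, ← one_mul (1 : R), ← monomial_mul]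
    exact map_mul_sub_mem_weightLT (monomial_mem_weightLT wt (Nat.lt_succ_self _) 1)
      (monomial_mem_weightLT wt (Nat.lt_succ_self _) 1) hd he
  induction d using Finsupp.induction_linear with
  | zero => simp
  | add d e hd he => exact hadd d e hd he
  | single s k =>
    induction k with
    | zero => simp
    | succ k ih =>
      rw [Finsupp.single_add]
      exact hadd _ _ ih (by simpa [X, Finsupp.weight_single] using hτ s)

lemma map_sub_mem_weightLT (hτ : ∀ s, τ (X s) - X s ∈ weightLT R wt (wt s)) {w : ℕ}
    {p : MvPolynomial σ R} (hp : p ∈ weightLT R wt (w + 1)) : τ p - p ∈ weightLT R wt w := by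
  suffices weightLT R wt (w + 1) ≤ (weightLT R wt w).comap (τ.toLinearMap - LinearMap.id) from
    this hp
  rw [weightLT, restrictSupport_eq_span, Submodule.span_le]
  rintro _ ⟨d, hd, rfl⟩
  exact weightLT_mono wt (Nat.lt_succ_iff.mp hd) (map_monomial_sub_mem_weightLT hτ d)

end WeightFiltration

section Translation

open MvPolynomial

variable {n : ℕ}

/-- Left translation by `A` on polynomial functions of a matrix, `p ↦ p(A · )`. -/
def leftTranslate (A : Mat n ℝ) :
    MvPolynomial (Fin n × Fin n) ℝ →ₐ[ℝ] MvPolynomial (Fin n × Fin n) ℝ :=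
  bind₁ fun s ↦ ∑ k, C (A s.1 k) * X (k, s.2)

/-- Right translation by `A` on polynomial functions of a matrix, `p ↦ p( · A)`. -/
def rightTranslate (A : Mat n ℝ) :
    MvPolynomial (Fin n × Fin n) ℝ →ₐ[ℝ] MvPolynomial (Fin n × Fin n) ℝ :=
  bind₁ fun s ↦ ∑ k, C (A k s.2) * X (s.1, k)

/-- The weight of a matrix entry for which translations by upper triangular unipotent matrices
act unipotently: it increases with the column index and decreases with the row index. -/
def matWeight (n : ℕ) (s : Fin n × Fin n) : ℕ := s.1.rev + s.2

lemma eval_bind₁ {σ τ R : Type*} [CommSemiring R] (x : τ → R) (f : σ → MvPolynomial τ R)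
    (p : MvPolynomial σ R) : eval x (bind₁ f p) = eval (fun s ↦ eval x (f s)) p :=
  eval₂Hom_bind₁ _ _ _ _

lemma eval_leftTranslate (A B : Mat n ℝ) (p : MvPolynomial (Fin n × Fin n) ℝ) :
    eval (matEval B) (leftTranslate A p) = eval (matEval (A * B)) p := by
  have hentry : (fun s ↦ eval (matEval B) (∑ k, C (A s.1 k) * X (k, s.2))) = matEval (A * B) := by
    ext s
    simp [matEval, Matrix.mul_apply]
  rw [leftTranslate, eval_bind₁, hentry]

lemma eval_rightTranslate (A B : Mat n ℝ) (p : MvPolynomial (Fin n × Fin n) ℝ) :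
    eval (matEval B) (rightTranslate A p) = eval (matEval (B * A)) p := by
  have hentry : (fun s ↦ eval (matEval B) (∑ k, C (A k s.2) * X (s.1, k))) = matEval (B * A) := by
    ext s
    simp [matEval, Matrix.mul_apply, mul_comm]
  rw [rightTranslate, eval_bind₁, hentry]

lemma leftTranslate_X_sub_mem {A : Mat n ℝ} (hA : A ∈ UTset n) (s : Fin n × Fin n) :
    leftTranslate A (X s) - X s ∈ weightLT ℝ (matWeight n) (matWeight n s) := by
  obtain ⟨i, j⟩ := s
  have hsplit : leftTranslate A (X (i, j)) - X (i, j) =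
      ∑ k ∈ Finset.univ.erase i, C (A i k) * X (k, j) := by
    rw [leftTranslate, bind₁_X_right, ← Finset.add_sum_erase _ _ (Finset.mem_univ i)]
    simp [hA.1]
  rw [hsplit]
  refine sum_mem fun k hk ↦ ?_
  rw [← smul_eq_C_mul]
  obtain hki | hik := lt_or_gt_of_ne (Finset.ne_of_mem_erase hk)
  · simp [hA.2 i k hki]
  · refine Submodule.smul_mem _ _ (X_mem_weightLT _ ?_)
    simp only [matWeight, Fin.val_rev]
    omega

lemma rightTranslate_X_sub_mem {A : Mat n ℝ} (hA : A ∈ UTset n) (s : Fin n × Fin n) :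
    rightTranslate A (X s) - X s ∈ weightLT ℝ (matWeight n) (matWeight n s) := by
  obtain ⟨i, j⟩ := s
  have hsplit : rightTranslate A (X (i, j)) - X (i, j) =
      ∑ k ∈ Finset.univ.erase j, C (A k j) * X (i, k) := by
    rw [rightTranslate, bind₁_X_right, ← Finset.add_sum_erase _ _ (Finset.mem_univ j)]
    simp [hA.1]
  rw [hsplit]
  refine sum_mem fun k hk ↦ ?_
  rw [← smul_eq_C_mul]
  obtain hkj | hjk := lt_or_gt_of_ne (Finset.ne_of_mem_erase hk)
  · refine Submodule.smul_mem _ _ (X_mem_weightLT _ ?_)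
    simp only [matWeight]
    omega
  · simp [hA.2 k j hjk]

end Translation

section UnipotentGroups

open MvPolynomial

variable {n : ℕ} {N H : Set (Mat n ℝ)}

lemma isUnit_det_of_mem_UTset {A : Mat n ℝ} (hA : A ∈ UTset n) : IsUnit A.det := by
  have htri : A.IsUpperTriangular := fun i j hji ↦ hA.2 i j hji
  simp [Matrix.det_of_isUpperTriangular htri, hA.1]

namespace IsRealUnipotentGroup

lemma subset_UTset (hN : IsRealUnipotentGroup n N) : N ⊆ UTset n := by
  obtain ⟨⟨S, rfl⟩, -⟩ := hN
  exact fun _ hA ↦ hA.1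

lemma isUnit_det (hN : IsRealUnipotentGroup n N) {a : Mat n ℝ} (ha : a ∈ N) : IsUnit a.det :=
  isUnit_det_of_mem_UTset (hN.subset_UTset ha)

lemma one_mem (hN : IsRealUnipotentGroup n N) : (1 : Mat n ℝ) ∈ N := hN.2.1

lemma mul_mem (hN : IsRealUnipotentGroup n N) {a b : Mat n ℝ} (ha : a ∈ N) (hb : b ∈ N) :
    a * b ∈ N :=
  hN.2.2.1 a ha b hb

lemma inv_mem (hN : IsRealUnipotentGroup n N) {a : Mat n ℝ} (ha : a ∈ N) : a⁻¹ ∈ N :=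
  hN.2.2.2 a ha

lemma subset_of_vanishingIdeal_le (hH : IsRealUnipotentGroup n H) (hN : N ⊆ UTset n)
    (hHN : vanishingIdeal ℝ (matEval '' H) ≤ vanishingIdeal ℝ (matEval '' N)) : N ⊆ H := by
  obtain ⟨⟨S, rfl⟩, -⟩ := hH
  refine fun a ha ↦ ⟨hN ha, fun p hp ↦ ?_⟩
  have hpH : p ∈ vanishingIdeal ℝ
      (matEval '' {A | A ∈ UTset n ∧ ∀ p ∈ S, eval (matEval A) p = 0}) := by
    rintro _ ⟨h, hh, rfl⟩
    exact hh.2 p hp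
  exact hHN hpH _ (Set.mem_image_of_mem _ ha)

lemma wellFoundedOn_ssubset : {N | IsRealUnipotentGroup n N}.WellFoundedOn (· ⊂ ·) := by
  have hwf : WellFounded fun N N' : Set (Mat n ℝ) ↦
      vanishingIdeal ℝ (matEval '' N') < vanishingIdeal ℝ (matEval '' N) :=
    InvImage.wf (fun N ↦ vanishingIdeal ℝ (matEval '' N)) wellFounded_gt
  refine hwf.wellFoundedOn.mono' fun N hN N' hN' hNN' ↦ ?_
  exact (vanishingIdeal_anti_mono (Set.image_mono hNN'.subset)).lt_of_not_ge fun hle ↦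
    hNN'.not_subset (hN.subset_of_vanishingIdeal_le hN'.subset_UTset hle)

end IsRealUnipotentGroup

/-- `p` restricts to a homomorphism from `N` to the additive group of real numbers. -/
def IsAdditiveOn (p : MvPolynomial (Fin n × Fin n) ℝ) (N : Set (Mat n ℝ)) : Prop :=
  ∀ a ∈ N, ∀ b ∈ N, eval (matEval (a * b)) p = eval (matEval a) p + eval (matEval b) p

namespace IsAdditiveOn

variable {p : MvPolynomial (Fin n × Fin n) ℝ}

lemma eval_one (hp : IsAdditiveOn p N) (h1 : 1 ∈ N) : eval (matEval (1 : Mat n ℝ)) p = 0 := by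
  simpa using hp 1 h1 1 h1

lemma isRealUnipotentGroup_ker (hp : IsAdditiveOn p N) (hN : IsRealUnipotentGroup n N) :
    IsRealUnipotentGroup n {a | a ∈ N ∧ eval (matEval a) p = 0} := by
  have hp1 := hp.eval_one hN.one_mem
  refine ⟨?_, ⟨hN.one_mem, hp1⟩, ?_, ?_⟩
  · obtain ⟨⟨S, rfl⟩, -⟩ := hN
    refine ⟨insert p S, ?_⟩
    ext A
    simp only [Set.mem_ofPred_eq, Set.forall_mem_insert]
    tauto
  · rintro a ⟨ha, hpa⟩ b ⟨hb, hpb⟩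
    exact ⟨hN.mul_mem ha hb, by rw [hp a ha b hb, hpa, hpb, add_zero]⟩
  · rintro a ⟨ha, hpa⟩
    refine ⟨hN.inv_mem ha, ?_⟩
    have hadd := hp a ha a⁻¹ (hN.inv_mem ha)
    rwa [Matrix.mul_nonsing_inv _ (hN.isUnit_det ha), hp1, hpa, zero_add, eq_comm] at hadd

end IsAdditiveOn

namespace IsRealUnipotentGroup

lemma exists_right_invariant (hH : IsRealUnipotentGroup n H) (hN : N ⊆ UTset n)
    (hNH : ¬N ⊆ H) :
    ∃ p : MvPolynomial (Fin n × Fin n) ℝ,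
      (∀ a ∈ N, ∀ h ∈ H, eval (matEval (a * h)) p = eval (matEval a) p) ∧
        ∃ a ∈ N, eval (matEval a) p ≠ eval (matEval 1) p := by
  obtain ⟨p, hpH, hpN, hinv⟩ := exists_notMem_forall_map_mem
    (W := fun w ↦ weightLT ℝ (matWeight n) w)
    (V := {p | ∀ h ∈ H, eval (matEval h) p = 0}) (K := {p | ∀ a ∈ N, eval (matEval a) p = 0})
    (D := fun (h : H) p ↦ rightTranslate (h : Mat n ℝ) p - p)
    (by simp [weightLT_zero]) (fun p _ ↦ exists_mem_weightLT _ p)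
    (fun h _ _ ↦ map_sub_mem_weightLT (rightTranslate_X_sub_mem (hH.subset_UTset h.2)))
    (fun h p hp k hk ↦ by
      rw [map_sub, eval_rightTranslate, hp k hk, hp _ (hH.mul_mem hk h.2), sub_zero])
    (by
      by_contra! hle
      refine hNH (hH.subset_of_vanishingIdeal_le hN fun p hp ↦ ?_)
      rintro _ ⟨a, ha, rfl⟩
      exact hle p (fun h hh ↦ hp _ ⟨h, hh, rfl⟩) a ha)
  simp only [Set.mem_ofPred_eq, map_sub, eval_rightTranslate, sub_eq_zero] at hinv
  refine ⟨p, fun a ha h hh ↦ hinv ⟨h, hh⟩ a ha, ?_⟩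
  simpa [hpH 1 hH.one_mem] using hpN

lemma exists_isAdditiveOn (hN : IsRealUnipotentGroup n N) (hH : IsRealUnipotentGroup n H)
    (hHN : H ⊂ N) :
    ∃ p, IsAdditiveOn p N ∧ (∀ h ∈ H, eval (matEval h) p = 0) ∧
      ∃ a ∈ N, eval (matEval a) p ≠ 0 := by
  obtain ⟨p, hpH, hpN, hinv⟩ := exists_notMem_forall_map_mem
    (W := fun w ↦ weightLT ℝ (matWeight n) w)
    (V := {p | ∀ a ∈ N, ∀ h ∈ H, eval (matEval (a * h)) p = eval (matEval a) p})
    (K := {p | ∀ a ∈ N, eval (matEval a) p = eval (matEval 1) p})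
    (D := fun (a : N) p ↦ leftTranslate (a : Mat n ℝ) p - p)
    (by simp [weightLT_zero]) (fun p _ ↦ exists_mem_weightLT _ p)
    (fun a _ _ ↦ map_sub_mem_weightLT (leftTranslate_X_sub_mem (hN.subset_UTset a.2)))
    (fun a p hp x hx h hh ↦ by
      simp only [map_sub, eval_leftTranslate]
      rw [hp x hx h hh, ← mul_assoc, hp _ (hN.mul_mem a.2 hx) h hh])
    (by simpa using hH.exists_right_invariant hN.subset_UTset hHN.not_subset)
  simp only [Set.mem_ofPred_eq, map_sub, eval_leftTranslate, mul_one] at hinv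
  refine ⟨p - C (eval (matEval 1) p), fun a ha b hb ↦ ?_, fun h hh ↦ ?_, ?_⟩
  · simp only [map_sub, eval_C]
    linarith [hinv ⟨a, ha⟩ b hb]
  · simpa [sub_eq_zero] using hpH 1 hN.one_mem h hh
  · simpa [sub_eq_zero] using hpN

end IsRealUnipotentGroup

end UnipotentGroups

section GenericSequence

open MvPolynomial Asymptotics

lemma exists_forall_isLittleO_nat {E : Type*} [SeminormedAddCommGroup E] (f : ℕ → ℕ → E) :
    ∃ y : ℕ → ℝ, (∀ k, 1 ≤ y k) ∧ ∀ m, f m =o[atTop] y := by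
  set S : ℕ → ℝ := fun k ↦ 1 + ∑ m ∈ Finset.range (k + 1), ‖f m k‖
  have hS (k : ℕ) : 1 ≤ S k := le_add_of_nonneg_right (by positivity)
  refine ⟨fun k ↦ (k + 1) * S k, fun k ↦ one_le_mul_of_one_le_of_one_le (by simp) (hS k),
    fun m ↦ ?_⟩
  have hfS : (fun k ↦ ‖f m k‖) =O[atTop] S := by
    refine IsBigO.of_bound' ((eventually_ge_atTop m).mono fun k hmk ↦ ?_)
    rw [norm_norm, Real.norm_of_nonneg (zero_le_one.trans (hS k))]
    have hle := Finset.single_le_sum (f := fun m ↦ ‖f m k‖) (fun _ _ ↦ norm_nonneg _)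
      (Finset.mem_range.2 (Nat.lt_succ_of_le hmk))
    exact hle.trans (le_add_of_nonneg_left zero_le_one)
  have hone : (fun _ ↦ (1 : ℝ)) =o[atTop] fun k : ℕ ↦ (k : ℝ) + 1 :=
    (isLittleO_const_left.2 (Or.inr (tendsto_norm_atTop_atTop.comp
      (tendsto_atTop_add_const_right _ 1 tendsto_natCast_atTop_atTop))))
  simpa using (hone.mul_isBigO hfS)

lemma exists_forall_eval_isLittleO {σ : Type*} [Countable σ] (u : ℕ → σ → ℝ) :
    ∃ y : ℕ → ℝ, (∀ k, 1 ≤ y k) ∧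
      ∀ q : MvPolynomial σ ℝ, (fun k ↦ eval (u k) q) =o[atTop] y := by
  obtain ⟨e, he⟩ := exists_surjective_nat (σ →₀ ℕ)
  obtain ⟨y, hy1, hy⟩ := exists_forall_isLittleO_nat fun m k ↦ eval (u k) (monomial (e m) (1 : ℝ))
  refine ⟨y, hy1, fun q ↦ ?_⟩
  have hsum (k : ℕ) :
      eval (u k) q = ∑ d ∈ q.support, q.coeff d * eval (u k) (monomial d (1 : ℝ)) := by
    simp [eval_eq (u k) q, eval_monomial, Finsupp.prod]
  simp only [hsum]
  refine IsLittleO.fun_sum fun d _ ↦ ?_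
  obtain ⟨m, rfl⟩ := he d
  exact (hy m).const_mul_left _

/-- A sequence of points along which every nonzero polynomial eventually stays away from `0`,
representing a hyperreal point at which only the zero polynomial is infinitesimal. -/
def IsGenericSeq {σ : Type*} (u : ℕ → σ → ℝ) : Prop :=
  ∀ p : MvPolynomial σ ℝ, p ≠ 0 → (fun _ ↦ (1 : ℝ)) =O[atTop] fun k ↦ eval (u k) p

lemma IsGenericSeq.cons {d : ℕ} {u : ℕ → Fin d → ℝ} (hu : IsGenericSeq u) {y : ℕ → ℝ}
    (hy1 : ∀ k, 1 ≤ y k)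
    (hy : ∀ q : MvPolynomial (Fin d) ℝ, (fun k ↦ eval (u k) q) =o[atTop] y) :
    IsGenericSeq fun k ↦ (Fin.cons (y k) (u k) : Fin (d + 1) → ℝ) := by
  intro p hp
  set P := finSuccEquiv ℝ d p
  have hP : P ≠ 0 := by simpa [P] using hp
  have heval (k : ℕ) : eval (Fin.cons (y k) (u k) : Fin (d + 1) → ℝ) p =
      ∑ i ∈ Finset.range P.natDegree, eval (u k) (P.coeff i) * y k ^ i +
        eval (u k) P.leadingCoeff * y k ^ P.natDegree := by
    rw [eval_eq_eval_mv_eval', Polynomial.eval_map, Polynomial.eval₂_eq_sum_range,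
      Finset.sum_range_succ]
    rfl
  have hpow {i j : ℕ} (hij : i ≤ j) : (fun k ↦ y k ^ i) =O[atTop] fun k ↦ y k ^ j :=
    IsBigO.of_norm_le fun k ↦ by
      rw [Real.norm_of_nonneg (pow_nonneg (zero_le_one.trans (hy1 k)) i)]
      exact pow_le_pow_right₀ (hy1 k) hij
  have hlower : (fun k ↦ ∑ i ∈ Finset.range P.natDegree, eval (u k) (P.coeff i) * y k ^ i)
      =o[atTop] fun k ↦ y k ^ P.natDegree := by
    refine IsLittleO.fun_sum fun i hi ↦ ?_
    refine ((hy (P.coeff i)).mul_isBigO (isBigO_refl (fun k ↦ y k ^ i) atTop)).trans_isBigO ?_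
    simpa only [pow_succ'] using hpow (Nat.succ_le_of_lt (Finset.mem_range.1 hi))
  have hlead : (fun k ↦ y k ^ P.natDegree)
      =O[atTop] fun k ↦ eval (u k) P.leadingCoeff * y k ^ P.natDegree := by
    simpa using (hu _ (Polynomial.leadingCoeff_ne_zero.2 hP)).mul
      (isBigO_refl (fun k ↦ y k ^ P.natDegree) atTop)
  have hone : (fun _ ↦ (1 : ℝ)) =O[atTop] fun k ↦ y k ^ P.natDegree := by
    simpa using hpow P.natDegree.zero_le
  simp only [heval]
  exact (hone.trans hlead).trans (hlower.trans_isBigO hlead).right_isBigO_add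

/-- Each new coordinate is chosen to dominate all polynomials in the previous ones. -/
lemma exists_isGenericSeq (d : ℕ) : ∃ u : ℕ → Fin d → ℝ, IsGenericSeq u := by
  induction d with
  | zero =>
    refine ⟨fun _ ↦ 0, fun p hp ↦ ?_⟩
    obtain ⟨c, rfl⟩ := C_surjective (Fin 0) p
    have hc : c ≠ 0 := fun h ↦ hp (by rw [h, C_0])
    simpa using isBigO_const_const (1 : ℝ) hc (atTop : Filter ℕ)
  | succ d ih =>
    obtain ⟨u, hu⟩ := ih
    obtain ⟨y, hy1, hy⟩ := exists_forall_eval_isLittleO u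
    exact ⟨_, hu.cons hy1 hy⟩

lemma IsGenericSeq.eq_zero_of_tendsto {σ : Type*} {u : ℕ → σ → ℝ} (hu : IsGenericSeq u)
    {l : Filter ℕ} [l.NeBot] (hl : l ≤ atTop) {q : MvPolynomial σ ℝ}
    (hq : Tendsto (fun k ↦ eval (u k) q) l (nhds 0)) : q = 0 := by
  by_contra hq0
  exact ((hu q hq0).mono hl).not_isLittleO (Eventually.of_forall fun _ ↦ one_ne_zero).frequently
    ((isLittleO_one_iff ℝ).2 hq)

end GenericSequence

section Nearness

variable {n : ℕ}

lemma ofSeq_sum {ι : Type*} (s : Finset ι) (f : ι → ℕ → ℝ) :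
    Hyperreal.ofSeq (fun k ↦ ∑ i ∈ s, f i k) = ∑ i ∈ s, Hyperreal.ofSeq (f i) := by
  rw [← Finset.sum_fn]
  exact map_sum (Germ.coeRingHom (R := ℝ) (hyperfilter ℕ : Filter ℕ)) f s

lemma matOfSeq_mul (a b : ℕ → Mat n ℝ) :
    matOfSeq n (fun k ↦ a k * b k) = matOfSeq n a * matOfSeq n b := by
  ext i j
  simp only [matOfSeq, Matrix.mul_apply, Matrix.of_apply, ofSeq_sum]
  rfl

lemma matOfSeq_eq_iff {a b : ℕ → Mat n ℝ} :
    matOfSeq n a = matOfSeq n b ↔ ∀ᶠ k in hyperfilter ℕ, a k = b k := by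
  simp only [← Matrix.ext_iff, matOfSeq, Matrix.of_apply, eventually_all]
  exact forall₂_congr fun _ _ ↦ Germ.coe_eq

lemma one_eq_matOfSeq : (1 : Mat n Hyperreal) = matOfSeq n fun _ ↦ 1 := by
  ext i j
  obtain rfl | hij := eq_or_ne i j
  · simp only [matOfSeq, Matrix.of_apply, Matrix.one_apply_eq]; rfl
  · simp only [matOfSeq, Matrix.of_apply, Matrix.one_apply_ne hij]; rfl

lemma matOfSeq_mem_matSharp_iff {S : Set (Mat n ℝ)} {a : ℕ → Mat n ℝ} :
    matOfSeq n a ∈ matSharp n S ↔ ∀ᶠ k in hyperfilter ℕ, a k ∈ S := by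
  refine ⟨?_, fun ha ↦ ⟨a, ha, rfl⟩⟩
  rintro ⟨b, hb, hab⟩
  filter_upwards [hb, matOfSeq_eq_iff.1 hab] with k hbk habk
  rwa [habk]

lemma matOfSeq_mem_muSet_iff {G : Set (Mat n ℝ)} {e : ℕ → Mat n ℝ} :
    matOfSeq n e ∈ muSet n G ↔
      (∀ᶠ k in hyperfilter ℕ, e k ∈ G) ∧ Tendsto e (hyperfilter ℕ) (nhds 1) := by
  have hentry (i j : Fin n) :
      Hyperreal.Infinitesimal (matOfSeq n e i j - (1 : Mat n Hyperreal) i j) ↔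
        Tendsto (fun k ↦ e k i j) (hyperfilter ℕ) (nhds ((1 : Mat n ℝ) i j)) := by
    rw [one_eq_matOfSeq, ← tendsto_sub_nhds_zero_iff]
    exact Hyperreal.isSt_ofSeq_iff_tendsto
  refine and_congr matOfSeq_mem_matSharp_iff ?_
  simp only [hentry]
  exact (tendsto_pi_nhds.trans (forall_congr' fun _ ↦ tendsto_pi_nhds)).symm

lemma nearCoset_matOfSeq_iff {G H : Set (Mat n ℝ)} {g : Mat n ℝ} {a : ℕ → Mat n ℝ} :
    NearCoset n G g H (matOfSeq n a) ↔
      ∃ e b : ℕ → Mat n ℝ,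
        ((∀ᶠ k in hyperfilter ℕ, e k ∈ G) ∧ Tendsto e (hyperfilter ℕ) (nhds 1)) ∧
        (∀ᶠ k in hyperfilter ℕ, b k ∈ H) ∧ ∀ᶠ k in hyperfilter ℕ, e k * (g * b k) = a k := by
  have hprod (e b : ℕ → Mat n ℝ) : matOfSeq n e * (matCast g * matOfSeq n b) = matOfSeq n a ↔
      ∀ᶠ k in hyperfilter ℕ, e k * (g * b k) = a k := by
    rw [← matOfSeq_eq_iff, matOfSeq_mul, matOfSeq_mul]
    rfl
  constructor
  · rintro ⟨_, ⟨⟨e, heG, rfl⟩, he⟩, _, ⟨_, rfl, _, ⟨b, hb, rfl⟩, rfl⟩, hab⟩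
    exact ⟨e, b, matOfSeq_mem_muSet_iff.1 ⟨⟨e, heG, rfl⟩, he⟩, hb, (hprod e b).1 hab⟩
  · rintro ⟨e, b, he, hb, hab⟩
    exact ⟨_, matOfSeq_mem_muSet_iff.2 he, _, ⟨_, rfl, _, ⟨b, hb, rfl⟩, rfl⟩, (hprod e b).2 hab⟩

end Nearness

section PolynomialMaps

open MvPolynomial

variable {n d : ℕ} {G N H : Set (Mat n ℝ)} {g : Mat n ℝ}

lemma mem_singleton_mul_iff_inv_mul_mem {ι R : Type*} [Fintype ι] [DecidableEq ι] [CommRing R]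
    {g a : Matrix ι ι R} (hg : IsUnit g.det) {N : Set (Matrix ι ι R)} :
    a ∈ {g} * N ↔ g⁻¹ * a ∈ N := by
  rw [Set.singleton_mul]
  constructor
  · rintro ⟨b, hb, rfl⟩
    rwa [Matrix.nonsing_inv_mul_cancel_left _ _ hg]
  · exact fun h ↦ ⟨_, h, Matrix.mul_nonsing_inv_cancel_left _ _ hg⟩

lemma nearCoset_of_forall_mem {a : ℕ → Mat n ℝ} (h1 : 1 ∈ G) (ha : ∀ k, a k ∈ {g} * H) :
    NearCoset n G g H (matOfSeq n a) := by
  simp only [Set.singleton_mul, Set.mem_image] at ha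
  choose b hb hab using ha
  exact nearCoset_matOfSeq_iff.2 ⟨fun _ ↦ 1, b,
    ⟨Eventually.of_forall fun _ ↦ h1, tendsto_const_nhds⟩, Eventually.of_forall hb,
    Eventually.of_forall fun k ↦ by rw [one_mul, hab]⟩

/-- Writing `a k = e k * (g * b k)` with `e k → 1` and `b k ∈ H`, the value of `p` at
`g⁻¹ * a k` is its value at `g⁻¹ * e k * g`, a sequence converging to `1`. -/
lemma IsAdditiveOn.tendsto_eval_of_nearCoset {p : MvPolynomial (Fin n × Fin n) ℝ}
    (hp : IsAdditiveOn p N) (hpH : ∀ h ∈ H, eval (matEval h) p = 0)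
    (hH : IsRealUnipotentGroup n H) (hHN : H ⊆ N) (hg : IsUnit g.det) {a : ℕ → Mat n ℝ}
    (haN : ∀ k, g⁻¹ * a k ∈ N) (hnear : NearCoset n G g H (matOfSeq n a)) :
    Tendsto (fun k ↦ eval (matEval (g⁻¹ * a k)) p) (hyperfilter ℕ) (nhds 0) := by
  obtain ⟨e, b, ⟨-, he⟩, hb, hab⟩ := nearCoset_matOfSeq_iff.1 hnear
  have hconj : Tendsto (fun k ↦ g⁻¹ * e k * g) (hyperfilter ℕ) (nhds 1) := by
    simpa [Matrix.nonsing_inv_mul _ hg] using (he.const_mul g⁻¹).mul_const g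
  have hcont : Continuous fun A : Mat n ℝ ↦ eval (matEval A) p :=
    (continuous_eval p).comp (by unfold matEval; fun_prop)
  have hlim := (hcont.tendsto 1).comp hconj
  rw [hp.eval_one (hHN hH.one_mem)] at hlim
  refine hlim.congr' ?_
  filter_upwards [hb, hab] with k hbk habk
  have hconj_eq : g⁻¹ * e k * g = g⁻¹ * a k * (b k)⁻¹ := by
    simp only [← habk, mul_assoc, Matrix.mul_nonsing_inv _ (hH.isUnit_det hbk), mul_one]
  have hbinv := hH.inv_mem hbk
  rw [Function.comp_apply, hconj_eq, hp _ (haN k) _ (hHN hbinv), hpH _ hbinv, add_zero]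

lemma IsPolyMapVec.const_mul {F : (Fin d → ℝ) → Mat n ℝ} (hF : IsPolyMapVec d n F)
    (A : Mat n ℝ) : IsPolyMapVec d n fun x ↦ A * F x := by
  obtain ⟨P, hP⟩ := hF
  exact ⟨fun i j ↦ ∑ k, C (A i k) * P k j, fun x i j ↦ by simp [Matrix.mul_apply, hP]⟩

lemma IsPolyMapVec.exists_eval_eq {F : (Fin d → ℝ) → Mat n ℝ} (hF : IsPolyMapVec d n F)
    (p : MvPolynomial (Fin n × Fin n) ℝ) :
    ∃ q : MvPolynomial (Fin d) ℝ, ∀ x, eval x q = eval (matEval (F x)) p := by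
  obtain ⟨P, hP⟩ := hF
  refine ⟨bind₁ (fun s ↦ P s.1 s.2) p, fun x ↦ ?_⟩
  simp only [eval_bind₁, ← hP]
  rfl

namespace IsGenericSeq

variable {u : ℕ → Fin d → ℝ} {F : (Fin d → ℝ) → Mat n ℝ}

lemma eval_eq_zero_of_nearCoset (hu : IsGenericSeq u) (hF : IsPolyMapVec d n F)
    {p : MvPolynomial (Fin n × Fin n) ℝ} (hp : IsAdditiveOn p N)
    (hpH : ∀ h ∈ H, eval (matEval h) p = 0) (hH : IsRealUnipotentGroup n H) (hHN : H ⊆ N)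
    (hg : IsUnit g.det) (hFN : ∀ x, g⁻¹ * F x ∈ N)
    (hnear : NearCoset n G g H (matOfSeq n fun k ↦ F (u k))) (x : Fin d → ℝ) :
    eval (matEval (g⁻¹ * F x)) p = 0 := by
  obtain ⟨q, hq⟩ := (hF.const_mul g⁻¹).exists_eval_eq p
  have hlim := hp.tendsto_eval_of_nearCoset hpH hH hHN hg (fun k ↦ hFN (u k)) hnear
  simp only [← hq] at hlim
  rw [← hq, hu.eq_zero_of_tendsto Nat.hyperfilter_le_atTop hlim, map_zero]

lemma forall_mem_of_nearCoset (hu : IsGenericSeq u) (hF : IsPolyMapVec d n F)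
    (hH : IsRealUnipotentGroup n H) (hg : IsUnit g.det)
    (hnear : NearCoset n G g H (matOfSeq n fun k ↦ F (u k))) (hN : IsRealUnipotentGroup n N)
    (hHN : H ⊆ N) (hFN : ∀ x, g⁻¹ * F x ∈ N) (x : Fin d → ℝ) : g⁻¹ * F x ∈ H := by
  revert hHN hFN
  refine IsRealUnipotentGroup.wellFoundedOn_ssubset.induction hN
    (P := fun N ↦ H ⊆ N → (∀ x, g⁻¹ * F x ∈ N) → g⁻¹ * F x ∈ H) fun N hN ih hHN hFN ↦ ?_
  obtain rfl | hssub := hHN.eq_or_ssubset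
  · exact hFN x
  obtain ⟨p, hp, hpH, a, haN, hpa⟩ := hN.exists_isAdditiveOn hH hssub
  have hker_ssubset : {a | a ∈ N ∧ eval (matEval a) p = 0} ⊂ N :=
    ⟨fun _ h ↦ h.1, fun hle ↦ hpa (hle haN).2⟩
  exact ih _ (hp.isRealUnipotentGroup_ker hN) hker_ssubset (fun h hh ↦ ⟨hHN hh, hpH h hh⟩)
    fun x ↦ ⟨hFN x, hu.eval_eq_zero_of_nearCoset hF hp hpH hH hHN hg hFN hnear x⟩

end IsGenericSeq

end PolynomialMaps

theorem stmt17_general {n d : ℕ} (G : Set (Mat n ℝ)) (hG : IsRealUnipotentGroup n G)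
    (F : (Fin d → ℝ) → Mat n ℝ) (hFpoly : IsPolyMapVec d n F) (hFG : ∀ x, F x ∈ G) :
    ∃ α ∈ matSharp n (Set.range F), ∀ g ∈ G, ∀ H : Set (Mat n ℝ), IsRealAlgSubgroup n G H →
      (NearCoset n G g H α ↔ Set.range F ⊆ {g} * H) := by
  obtain ⟨u, hu⟩ := exists_isGenericSeq d
  refine ⟨matOfSeq n fun k ↦ F (u k),
    matOfSeq_mem_matSharp_iff.2 (Eventually.of_forall fun k ↦ Set.mem_range_self (u k)),
    fun g hg H hH ↦ ⟨?_, fun hFH ↦ ?_⟩⟩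
  · rintro hnear _ ⟨x, rfl⟩
    have hgdet := hG.isUnit_det hg
    exact (mem_singleton_mul_iff_inv_mul_mem hgdet).2 <|
      hu.forall_mem_of_nearCoset hFpoly hH.2 hgdet hnear hG hH.1
        (fun x ↦ hG.mul_mem (hG.inv_mem hg) (hFG x)) x
  · exact nearCoset_of_forall_mem hG.one_mem fun k ↦ hFH (Set.mem_range_self (u k))

/-- if `gH` is the minimal coset containing the image `X` of a polynomial
map, then some `α ∈ X^♯` has nearest coset exactly `gH`. -/
theorem stmt17 {n d : ℕ} (G : Set (Mat n ℝ)) (hG : IsRealUnipotentGroup n G)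
    (F : (Fin d → ℝ) → Mat n ℝ) (hFpoly : IsPolyMapVec d n F) (hFG : ∀ x, F x ∈ G)
    (X : Set (Mat n ℝ)) (hX : X = Set.range F)
    (g : Mat n ℝ) (hg : g ∈ G) (H : Set (Mat n ℝ)) (hH : IsRealAlgSubgroup n G H)
    (hXgH : X ⊆ {g} * H)
    (hmin : ∀ g' ∈ G, ∀ H' : Set (Mat n ℝ), IsRealAlgSubgroup n G H' → X ⊆ {g'} * H' →
      {g} * H ⊆ {g'} * H') :
    ∃ α ∈ matSharp n X, NearCoset n G g H α ∧
      ∀ g' ∈ G, ∀ H' : Set (Mat n ℝ), IsRealAlgSubgroup n G H' → NearCoset n G g' H' α →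
        {g} * H ⊆ {g'} * H' := by
  subst hX
  obtain ⟨α, hα, hnear_iff⟩ := stmt17_general G hG F hFpoly hFG
  exact ⟨α, hα, (hnear_iff g hg H hH).2 hXgH, fun g' hg' H' hH' hnear ↦
    hmin g' hg' H' hH' ((hnear_iff g' hg' H' hH').1 hnear)⟩
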